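/- Fix real numbers SNR1, SNR2 > 0 and INR12, INR21 > 1, and assume INR21 > SNR2. For every ρ ∈ [0,1), κ_{1,1}(ρ) + κ_4(ρ) ≤ (1/2)·log(SNR1 + INR12 + 1) + (1/2)·log(2 + SNR1/INR21) + (1/2)·log(INR21 + 1) + 3/2. -/

import Mathlib

/-!
By AM-GM the coherent combining term `2ρ√(SI)` is at most `S + I`, so correlation at most doubles
the power of a received signal and costs at most half a bit in each of the two received-power
terms. When `SNR2 ≤ INR21`, replacing `SNR2 + INR21 + 1` by `INR21 + 1` costs another half bit. The
remaining term needs no slack: `t S / (1 + t I) ≤ S / I` for every `t ≥ 0`.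
-/

open Real

theorem abs_two_mul_mul_sqrt_mul_le_add {a b ρ : ℝ} (ha : 0 ≤ a) (hb : 0 ≤ b) (hρ : |ρ| ≤ 1) :
    |2 * ρ * √(a * b)| ≤ a + b :=
  calc |2 * ρ * √(a * b)| = |ρ| * (2 * √a * √b) := by
        rw [sqrt_mul ha, abs_mul, abs_mul, abs_two, abs_of_nonneg (by positivity : 0 ≤ √a * √b)]
        ring
    _ ≤ 2 * √a * √b := mul_le_of_le_one_left (by positivity) hρ
    _ ≤ √a ^ 2 + √b ^ 2 := two_mul_le_add_sq _ _
    _ = a + b := by rw [sq_sqrt ha, sq_sqrt hb]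

theorem mul_div_one_add_mul_le_div {K : Type*} [Field K] [LinearOrder K] [IsStrictOrderedRing K]
    {t x y : K} (ht : 0 ≤ t) (hx : 0 ≤ x) (hy : 0 < y) : t * x / (1 + t * y) ≤ x / y := by
  rw [div_le_div_iff₀ (by positivity) hy]
  linarith

theorem logb_le_one_add_logb {b x y : ℝ} (hb : 1 < b) (hx : 0 < x) (hxy : x ≤ b * y) :
    logb b x ≤ 1 + logb b y := by
  have hb₀ : 0 < b := one_pos.trans hb
  have hy : 0 < y := pos_of_mul_pos_right (hx.trans_le hxy) hb₀.le
  calc logb b x ≤ logb b (b * y) := logb_le_logb_of_le hb hx hxy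
    _ = 1 + logb b y := by rw [logb_mul hb₀.ne' hy.ne', logb_self_eq_one hb]

/-- The signal power, relative to the noise, at a receiver that hears two inputs with correlation
coefficient `ρ` at strengths `S` and `I`. This is `b_{1,1}(ρ)` for `(S, I) = (SNR1, INR12)` and
`b_{1,2}(ρ)` for `(S, I) = (SNR2, INR21)`. -/
noncomputable def receivedPower (S I ρ : ℝ) : ℝ := S + 2 * ρ * √(S * I) + I

section receivedPower

variable {S I ρ : ℝ}

theorem receivedPower_nonneg (hS : 0 ≤ S) (hI : 0 ≤ I) (hρ : |ρ| ≤ 1) :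
    0 ≤ receivedPower S I ρ := by
  have hcross := neg_le_of_abs_le (abs_two_mul_mul_sqrt_mul_le_add hS hI hρ)
  unfold receivedPower
  linarith

theorem receivedPower_le_two_mul (hS : 0 ≤ S) (hI : 0 ≤ I) (hρ : |ρ| ≤ 1) :
    receivedPower S I ρ ≤ 2 * (S + I) := by
  have hcross := le_of_abs_le (abs_two_mul_mul_sqrt_mul_le_add hS hI hρ)
  unfold receivedPower
  linarith

theorem logb_receivedPower_add_one_le (hS : 0 ≤ S) (hI : 0 ≤ I) (hρ : |ρ| ≤ 1) :
    logb 2 (receivedPower S I ρ + 1) ≤ 1 + logb 2 (S + I + 1) := by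
  have hnonneg := receivedPower_nonneg hS hI hρ
  have hle := receivedPower_le_two_mul hS hI hρ
  exact logb_le_one_add_logb one_lt_two (by linarith) (by linarith)

end receivedPower

/-- The term `κ_{1,1}(ρ)` of the sum bound, in bits: the capacity of a Gaussian channel whose
signal-to-noise ratio is the power received at receiver 1. -/
noncomputable def kappa11 (SNR1 INR12 ρ : ℝ) : ℝ :=
  (1 / 2) * logb 2 (receivedPower SNR1 INR12 ρ + 1)

/-- The term `κ_4(ρ)` of the sum bound, in bits, with `b_{4,1}(ρ) = (1 - ρ²) SNR1` and
`b_{5,2}(ρ) = (1 - ρ²) INR21` written out. -/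
noncomputable def kappa4 (SNR1 SNR2 INR21 ρ : ℝ) : ℝ :=
  (1 / 2) * logb 2 (1 + ((1 - ρ ^ 2) * SNR1) / (1 + (1 - ρ ^ 2) * INR21)) +
    (1 / 2) * logb 2 (receivedPower SNR2 INR21 ρ + 1)

theorem kappa11_le {SNR1 INR12 ρ : ℝ} (hS1 : 0 ≤ SNR1) (h12 : 0 ≤ INR12) (hρ : |ρ| ≤ 1) :
    kappa11 SNR1 INR12 ρ ≤ (1 / 2) * logb 2 (SNR1 + INR12 + 1) + 1 / 2 := by
  have hpower := logb_receivedPower_add_one_le hS1 h12 hρ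
  unfold kappa11
  linarith

theorem kappa4_le {SNR1 SNR2 INR21 ρ : ℝ} (hS1 : 0 ≤ SNR1) (hS2 : 0 ≤ SNR2) (h21 : 0 < INR21)
    (hρ : |ρ| ≤ 1) :
    kappa4 SNR1 SNR2 INR21 ρ ≤
      (1 / 2) * logb 2 (1 + SNR1 / INR21) + (1 / 2) * logb 2 (SNR2 + INR21 + 1) + 1 / 2 := by
  have ht : 0 ≤ 1 - ρ ^ 2 := sub_nonneg.2 ((sq_le_one_iff_abs_le_one ρ).2 hρ)
  have hratio : logb 2 (1 + ((1 - ρ ^ 2) * SNR1) / (1 + (1 - ρ ^ 2) * INR21)) ≤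
      logb 2 (1 + SNR1 / INR21) :=
    logb_le_logb_of_le one_lt_two (by positivity)
      (add_le_add_right (mul_div_one_add_mul_le_div ht hS1 h21) 1)
  have hpower := logb_receivedPower_add_one_le hS2 h21.le hρ
  unfold kappa4
  linarith

theorem kappa11_add_kappa4_upper_bound_general {SNR1 SNR2 INR12 INR21 ρ : ℝ}
    (hS1 : 0 ≤ SNR1) (hS2 : 0 ≤ SNR2) (h12 : 0 ≤ INR12) (h21 : 0 < INR21)
    (hHIR2 : SNR2 ≤ INR21) (hρ : |ρ| ≤ 1) :
    kappa11 SNR1 INR12 ρ + kappa4 SNR1 SNR2 INR21 ρ ≤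
      (1 / 2) * logb 2 (SNR1 + INR12 + 1) + (1 / 2) * logb 2 (1 + SNR1 / INR21) +
        (1 / 2) * logb 2 (INR21 + 1) + 3 / 2 := by
  have hkappa11 := kappa11_le hS1 h12 hρ
  have hkappa4 := kappa4_le hS1 hS2 h21 hρ
  have hdominant : logb 2 (SNR2 + INR21 + 1) ≤ 1 + logb 2 (INR21 + 1) :=
    logb_le_one_add_logb one_lt_two (by positivity) (by linarith)
  linarith

/-- Upper bound on `κ_{1,1}(ρ) + κ_4(ρ)` for `ρ ∈ [0,1)` when `INR21 > SNR2`. -/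
theorem kappa11_add_kappa4_upper_bound
    (SNR1 SNR2 INR12 INR21 : ℝ)
    (hS1 : 0 < SNR1) (hS2 : 0 < SNR2) (h12 : 1 < INR12) (h21 : 1 < INR21)
    (hHIR2 : INR21 > SNR2) :
    ∀ ρ ∈ Set.Ico (0 : ℝ) 1,
    (1/2) * Real.logb 2 ((SNR1 + 2 * ρ * Real.sqrt (SNR1 * INR12) + INR12) + 1) +
      ((1/2) * Real.logb 2 (1 + ((1 - ρ^2) * SNR1) / (1 + (1 - ρ^2) * INR21)) +
        (1/2) * Real.logb 2 ((SNR2 + 2 * ρ * Real.sqrt (SNR2 * INR21) + INR21) + 1)) ≤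
    (1/2) * Real.logb 2 (SNR1 + INR12 + 1) + (1/2) * Real.logb 2 (2 + SNR1 / INR21) +
      (1/2) * Real.logb 2 (INR21 + 1) + 3/2 := by
  intro ρ hρ
  have hρ_abs : |ρ| ≤ 1 := (abs_of_nonneg hρ.1).trans_le hρ.2.le
  refine (kappa11_add_kappa4_upper_bound_general hS1.le hS2.le (by linarith) (by linarith)
    hHIR2.le hρ_abs).trans ?_
  gcongr <;> norm_num
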